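/- Let l : Fin d and suppose that for every j : Fin d the function f j does not depend on coordinate l. Then for every x : Fin d → ℝ, the second partial derivative of log p at x along the l-th coordinate (the l-th diagonal entry of the Hessian of log p) equals -1/(σ l)^2; in particular it is constant in x, so its variance under any distribution of x is zero. (Forward direction of Lemma 1(i): for a leaf node the diagonal Hessian entry of the log-density is constant.) -/

import Mathlib

open Real MeasureTheory

/-! A leaf coordinate `x l` enters the density only through its own conditional factor
`N(x l; f l x, σ l ^ 2)`, in which the mean `f l x` is moreover independent of `x l`. Along
coordinate `l`, `log p` is therefore the log-density of a fixed Gaussian plus a constant, i.e. a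
quadratic polynomial with second derivative `-1 / σ l ^ 2`. -/

section DependsOn

open Function

variable {ι : Type*} [DecidableEq ι] {α : ι → Type*} {l : ι}

lemma dependsOn_compl_singleton_iff {β : Type*} {f : (∀ i, α i) → β} :
    DependsOn f {l}ᶜ ↔ ∀ x t, f x = f (update x l t) := by
  refine ⟨fun hf x t ↦ hf fun i hi ↦ (update_of_ne hi t x).symm, fun hf x y hxy ↦ ?_⟩
  have hy : y = update x l (y l) := eq_update_iff.mpr ⟨rfl, fun i hi ↦ (hxy i hi).symm⟩
  rw [hy, ← hf]

lemma prod_update_eq_mul_prod_erase [Fintype ι] {M : Type*} [CommMonoid M]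
    {g : ι → (∀ i, α i) → M} (hg : ∀ j ≠ l, DependsOn (g j) {l}ᶜ) (x : ∀ i, α i) (t : α l) :
    ∏ j, g j (update x l t) = g l (update x l t) * ∏ j ∈ Finset.univ.erase l, g j x := by
  rw [← Finset.mul_prod_erase _ _ (Finset.mem_univ l)]
  congr 1
  refine Finset.prod_congr rfl fun j hj ↦ ?_
  exact (dependsOn_compl_singleton_iff.mp (hg j (Finset.ne_of_mem_erase hj)) x t).symm

end DependsOn

lemma deriv_log_mul_const {g : ℝ → ℝ} (hg : ∀ t, g t ≠ 0) {c : ℝ} (hc : c ≠ 0) :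
    deriv (fun t ↦ log (g t * c)) = deriv fun t ↦ log (g t) := by
  simp only [log_mul (hg _) hc, deriv_add_const']

section Gaussian

open ProbabilityTheory
open scoped NNReal

lemma gaussianPDFReal_toNNReal_sq (μ : ℝ) {s : ℝ} (hs : 0 ≤ s) (x : ℝ) :
    gaussianPDFReal μ (s ^ 2).toNNReal x =
      (s * √(2 * π))⁻¹ * exp (-(x - μ) ^ 2 / (2 * s ^ 2)) := by
  rw [gaussianPDFReal, coe_toNNReal _ (sq_nonneg s), sqrt_mul' _ (sq_nonneg s), sqrt_sq hs,
    mul_comm √_]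

variable (μ : ℝ) {v : ℝ≥0}

lemma log_gaussianPDFReal (hv : v ≠ 0) (x : ℝ) :
    log (gaussianPDFReal μ v x) = log (√(2 * π * v))⁻¹ + -(x - μ) ^ 2 / (2 * v) := by
  rw [gaussianPDFReal, log_mul (by positivity) (exp_ne_zero _), log_exp]

lemma deriv_log_gaussianPDFReal (hv : v ≠ 0) :
    deriv (fun x ↦ log (gaussianPDFReal μ v x)) = fun x ↦ -(x - μ) / v := by
  funext x
  simp only [log_gaussianPDFReal μ hv]
  have hsq : HasDerivAt (fun y ↦ (y - μ) ^ 2) (2 * (x - μ)) x := by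
    simpa using ((hasDerivAt_id x).sub_const μ).fun_pow 2
  rw [((hsq.fun_neg.div_const (2 * v : ℝ)).const_add _).deriv, ← mul_neg,
    mul_div_mul_left _ _ two_ne_zero]

lemma deriv_deriv_log_gaussianPDFReal (hv : v ≠ 0) :
    deriv (deriv fun x ↦ log (gaussianPDFReal μ v x)) = fun _ ↦ -1 / (v : ℝ) := by
  funext x
  rw [deriv_log_gaussianPDFReal μ hv]
  exact (((hasDerivAt_id x).sub_const μ).fun_neg.div_const (v : ℝ)).deriv

lemma prod_gaussianPDFReal_update {ι : Type*} [Fintype ι] [DecidableEq ι]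
    {f : ι → (ι → ℝ) → ℝ} {l : ι} (hleaf : ∀ j, DependsOn (f j) {l}ᶜ)
    (v : ι → ℝ≥0) (x : ι → ℝ) (t : ℝ) :
    ∏ j, gaussianPDFReal (f j (Function.update x l t)) (v j) (Function.update x l t j) =
      gaussianPDFReal (f l x) (v l) t *
        ∏ j ∈ Finset.univ.erase l, gaussianPDFReal (f j x) (v j) (x j) := by
  have hfactor (j : ι) (hj : j ≠ l) :
      DependsOn (fun y : ι → ℝ ↦ gaussianPDFReal (f j y) (v j) (y j)) {l}ᶜ := fun y z hyz ↦ by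
    simp only [hleaf j hyz, hyz j hj]
  rw [prod_update_eq_mul_prod_erase hfactor, ← dependsOn_compl_singleton_iff.mp (hleaf l),
    Function.update_self]

theorem leaf_hessian_constant_general {ι : Type*} [Fintype ι] [DecidableEq ι]
    {σ : ι → ℝ} (hσ : ∀ j, 0 < σ j) {f : ι → (ι → ℝ) → ℝ} {p : (ι → ℝ) → ℝ}
    (hp : ∀ x, p x = ∏ j, (σ j * √(2 * π))⁻¹ * exp (-(x j - f j x) ^ 2 / (2 * σ j ^ 2)))
    {l : ι} (hleaf : ∀ j, DependsOn (f j) {l}ᶜ) (x : ι → ℝ) :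
    deriv (deriv fun t ↦ log (p (Function.update x l t))) = fun _ ↦ -1 / σ l ^ 2 := by
  let v (j : ι) : ℝ≥0 := (σ j ^ 2).toNNReal
  have hv (j : ι) : v j ≠ 0 := (toNNReal_pos.mpr (pow_pos (hσ j) 2)).ne'
  have hp_gaussian (y : ι → ℝ) : p y = ∏ j, gaussianPDFReal (f j y) (v j) (y j) := by
    simp only [hp, v, gaussianPDFReal_toNNReal_sq _ (hσ _).le]
  have hrest : ∏ j ∈ Finset.univ.erase l, gaussianPDFReal (f j x) (v j) (x j) ≠ 0 :=
    Finset.prod_ne_zero_iff.mpr fun j _ ↦ (gaussianPDFReal_pos _ _ _ (hv j)).ne'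
  simp only [hp_gaussian, prod_gaussianPDFReal_update hleaf]
  rw [deriv_log_mul_const (fun t ↦ (gaussianPDFReal_pos _ _ t (hv l)).ne') hrest,
    deriv_deriv_log_gaussianPDFReal _ (hv l), coe_toNNReal _ (sq_nonneg (σ l))]

end Gaussian

/-- Forward direction of Lemma 1(i): for a leaf node `l` (no structural function depends
on coordinate `l`), the `l`-th diagonal entry of the Hessian of `log p` is the constant
`-1/(σ l)^2`. -/
theorem leaf_hessian_constant
    (d : ℕ) (σ : Fin d → ℝ) (hσ : ∀ j, 0 < σ j)
    (f : Fin d → (Fin d → ℝ) → ℝ) (hf : ∀ j, Differentiable ℝ (f j))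
    (p : (Fin d → ℝ) → ℝ)
    (hp : ∀ x, p x = ∏ j, (σ j * Real.sqrt (2 * π))⁻¹ *
      Real.exp (-(x j - f j x) ^ 2 / (2 * (σ j) ^ 2)))
    (l : Fin d)
    (hleaf : ∀ (j : Fin d) (x : Fin d → ℝ) (t : ℝ), f j x = f j (Function.update x l t)) :
    ∀ x : Fin d → ℝ,
      deriv (deriv (fun t => Real.log (p (Function.update x l t)))) (x l)
        = -1 / (σ l) ^ 2 := by
  intro x
  exact congrFun (leaf_hessian_constant_general hσ hp
    (fun j ↦ dependsOn_compl_singleton_iff.mpr (hleaf j)) x) (x l)
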